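/- Let g be a continuous complex-valued function on the closed unit disk, and let f ∈ C²(𝔻)∩C(𝕋) satisfy Δf = g on 𝔻, f(0) = 0, J_f(0) = 1, sup_{z∈𝔻}|g(z)| ≤ M₁ and sup_{z∈𝔻}|f(z)| ≤ M₂, where M₁ ≥ 0 and M₂ > 0 are constants. Let r₀ ∈ (0,1) be the (unique) solution of 1/((4/π)M₂ + (2/3)M₁) − (4M₂/π)·r₀(2−r₀)/(1−r₀)² − 2M₁·[log(4(1+r₀)) − log r₀]·(2+r₀)r₀ = 0. Then f is injective on the disk 𝔻_{r₀} = {z : |z| < r₀}, and the image f(𝔻_{r₀}) contains a disk centered at f(0) = 0 of radius R₀ with R₀ ≥ (2M₂/π)·r₀²(2−r₀)/(1−r₀)². -/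

import Mathlib

open Metric MeasureTheory Set Filter

noncomputable section

/-- The Wirtinger derivative `∂f/∂z = (f_x - i f_y)/2`. -/
def wdz (f : ℂ → ℂ) (z : ℂ) : ℂ :=
  (fderiv ℝ f z 1 - Complex.I * fderiv ℝ f z Complex.I) / 2

/-- The Wirtinger derivative `∂f/∂z̄ = (f_x + i f_y)/2`. -/
def wdzbar (f : ℂ → ℂ) (z : ℂ) : ℂ :=
  (fderiv ℝ f z 1 + Complex.I * fderiv ℝ f z Complex.I) / 2

/-- The Laplacian `Δf = f_xx + f_yy` (equivalently `4 f_{z z̄}`). -/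
def lap (f : ℂ → ℂ) (z : ℂ) : ℂ :=
  fderiv ℝ (fun w => fderiv ℝ f w 1) z 1 +
    fderiv ℝ (fun w => fderiv ℝ f w Complex.I) z Complex.I

/-- The Poisson integral `P_ψ(z) = (1/2π) ∫₀^{2π} ((1-|z|²)/|1-z e^{-it}|²) ψ(e^{it}) dt`. -/
def poissonIntegral (ψ : ℂ → ℂ) (z : ℂ) : ℂ :=
  (1 / (2 * Real.pi) : ℝ) • ∫ t in (0:ℝ)..(2 * Real.pi),
    (((1 - ‖z‖ ^ 2) / ‖1 - z * Complex.exp (-(Complex.I * (t : ℂ)))‖ ^ 2 : ℝ) : ℂ) *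
      ψ (Complex.exp (Complex.I * (t : ℂ)))

/-- The Green potential `G_g(z) = (1/2π) ∫_𝔻 log|(1 - z w̄)/(z - w)| g(w) dA(w)`. -/
def greenPotential (g : ℂ → ℂ) (z : ℂ) : ℂ :=
  (1 / (2 * Real.pi) : ℝ) • ∫ w in ball (0:ℂ) 1,
    ((Real.log ‖(1 - z * (starRingEnd ℂ) w) / (z - w)‖ : ℝ) : ℂ) * g w

/-- `sup_{z ∈ 𝔻} |g(z)|`. -/
def supD (g : ℂ → ℂ) : ℝ := sSup ((fun z => ‖g z‖) '' ball (0:ℂ) 1)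

/-- The function `μ(r)` with constant `c` in place of `‖g‖_∞`. -/
def mu (c r : ℝ) : ℝ :=
  c * (1 - r ^ 2) / (8 * r ^ 2) *
    ((1 + r ^ 2) / (1 - r ^ 2) - (1 - r ^ 2) / (2 * r) * Real.log ((1 + r) / (1 - r)))

/-!
Subtract from `f` a harmonic function `h` with almost the same boundary values. Each rotation of `h`
has as real part that of a holomorphic function; the real part obeys the boundary bound of `f`, so
the Taylor coefficients satisfy Cauchy estimates with the constant `4 / π`, twice the mean of
`|cos|`. The remainder `f - h` is nearly zero on the boundary circle, and its gradient is bounded by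
comparing its odd parts with a barrier on half balls: if `‖Δu‖ ≤ M` on a ball of radius `R` in
dimension `n` and `‖u‖ ≤ S` on the sphere, then the gradient at the centre is at most
`M R / 2 + n S / R`. Splitting off a harmonic part on each of the successively halved discs, one
finds that the gradient of the remainder oscillates by at most `4 M r log (4 R / r)` at distance `r`
from the centre.

Since the Jacobian at `0` is `1`, the bound `‖Df(0)‖ ≤ Λ` gives `‖Df(0) e‖ ≥ ‖e‖ / Λ`. The equation
for `r₀` balances `1 / Λ` against the oscillation of the gradient on the disc of radius `r₀`, so the
quantitative inverse function argument of Landau's theorem applies on that disc.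
-/

open InnerProductSpace Laplacian Topology

section SecondDerivative

variable {E F : Type*} [NormedAddCommGroup E] [NormedSpace ℝ E]
  [NormedAddCommGroup F] [NormedSpace ℝ F]

lemma fderiv_fderiv_apply_eq_iteratedFDeriv {f : E → F} {x : E} (hf : ContDiffAt ℝ 2 f x)
    (v : E) : fderiv ℝ (fun y => fderiv ℝ f y v) x v = iteratedFDeriv ℝ 2 f x ![v, v] := by
  have hdiff : DifferentiableAt ℝ (fderiv ℝ f) x :=
    (hf.fderiv_right (m := 1) (by norm_num)).differentiableAt one_ne_zero
  simp [fderiv_clm_apply hdiff (differentiableAt_const v), iteratedFDeriv_two_apply]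

lemma deriv_deriv_comp_line {f : E → F} {x : E} (hf : ContDiffAt ℝ 2 f x) (v : E) :
    deriv (deriv fun t : ℝ => f (x + t • v)) 0 = iteratedFDeriv ℝ 2 f x ![v, v] := by
  have hline : ∀ t : ℝ, HasDerivAt (fun t : ℝ => x + t • v) v t := fun t => by
    simpa using ((hasDerivAt_id t).smul_const v).const_add x
  have htend : Tendsto (fun t : ℝ => x + t • v) (𝓝 0) (𝓝 x) := by
    simpa using (hline 0).continuousAt.tendsto
  have hfirst : (deriv fun t : ℝ => f (x + t • v)) =ᶠ[𝓝 0] fun t => fderiv ℝ f (x + t • v) v := by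
    filter_upwards [htend.eventually (hf.eventually (by simp))] with t ht
    exact ((ht.differentiableAt two_ne_zero).hasFDerivAt.comp_hasDerivAt t (hline t)).deriv
  have hsecond : DifferentiableAt ℝ (fun y => fderiv ℝ f y v) (x + (0 : ℝ) • v) := by
    rw [zero_smul, add_zero]
    exact ((hf.fderiv_right (m := 1) (by norm_num)).differentiableAt one_ne_zero).clm_apply
      (differentiableAt_const v)
  have hderiv := (hsecond.hasFDerivAt.comp_hasDerivAt (0 : ℝ) (hline 0)).deriv
  rw [zero_smul, add_zero, fderiv_fderiv_apply_eq_iteratedFDeriv hf] at hderiv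
  exact hfirst.deriv_eq.trans hderiv

lemma iteratedFDeriv_two_nonpos_of_isLocalMax {φ : E → ℝ} {x : E} (hφ : ContDiffAt ℝ 2 φ x)
    (hmax : IsLocalMax φ x) (v : E) : iteratedFDeriv ℝ 2 φ x ![v, v] ≤ 0 := by
  by_contra! hpos
  let g : ℝ → ℝ := fun t => φ (x + t • v)
  have hline : ContinuousAt (fun t : ℝ => x + t • v) 0 := by fun_prop
  have hg : IsLocalMax g 0 := by
    have := hline.tendsto.eventually (p := fun y => φ y ≤ φ x)
      (by simpa [IsLocalMax, IsMaxFilter] using hmax)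
    simpa [IsLocalMax, IsMaxFilter, g] using this
  have hgcont : ContinuousAt g 0 :=
    ContinuousAt.comp (g := φ) (by simpa using hφ.continuousAt) hline
  rw [← deriv_deriv_comp_line hφ v] at hpos
  have hmin : IsLocalMin g 0 := isLocalMin_of_deriv_deriv_pos hpos hg.deriv_eq_zero hgcont
  have hconst : g =ᶠ[𝓝 0] fun _ => g 0 := by
    filter_upwards [hg, hmin] with t using le_antisymm
  simp [g, hconst.deriv.deriv_eq] at hpos

end SecondDerivative

lemma lap_eq_laplacian {f : ℂ → ℂ} {z : ℂ} (hf : ContDiffAt ℝ 2 f z) : lap f z = Δ f z := by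
  rw [lap, fderiv_fderiv_apply_eq_iteratedFDeriv hf, fderiv_fderiv_apply_eq_iteratedFDeriv hf,
    laplacian_eq_iteratedFDeriv_complexPlane]

section Laplacian

variable {E F : Type*} [NormedAddCommGroup E] [InnerProductSpace ℝ E] [FiniteDimensional ℝ E]
  [NormedAddCommGroup F] [NormedSpace ℝ F]

lemma laplacian_nonpos_of_isLocalMax {φ : E → ℝ} {x : E} (hφ : ContDiffAt ℝ 2 φ x)
    (hmax : IsLocalMax φ x) : Δ φ x ≤ 0 := by
  rw [laplacian_eq_iteratedFDeriv_stdOrthonormalBasis]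
  exact Finset.sum_nonpos fun i _ => iteratedFDeriv_two_nonpos_of_isLocalMax hφ hmax _

lemma laplacian_comp_add_linearIsometryEquiv (f : E → F) (c : E) (L : E ≃ₗᵢ[ℝ] E) (x : E) :
    Δ (fun y => f (c + L y)) x = Δ f (c + L x) := by
  let b := stdOrthonormalBasis ℝ E
  rw [laplacian_eq_iteratedFDeriv_orthonormalBasis _ b,
    laplacian_eq_iteratedFDeriv_orthonormalBasis f (b.map L)]
  refine Finset.sum_congr rfl fun i _ => ?_
  have hcomp := L.toContinuousLinearEquiv.iteratedFDerivWithin_comp_right (fun y => f (c + y))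
    uniqueDiffOn_univ (mem_univ (L x)) 2
  simp only [preimage_univ, iteratedFDerivWithin_univ, iteratedFDeriv_comp_add_left] at hcomp
  refine (congrArg (· ![b i, b i]) hcomp).trans ?_
  simp only [ContinuousMultilinearMap.compContinuousLinearMap_apply]
  congr 1
  ext j
  fin_cases j <;> rfl

lemma laplacian_bilin_diag {ι : Type*} [Fintype ι] (b : OrthonormalBasis ι ℝ E)
    (B : E →L[ℝ] E →L[ℝ] F) (x : E) : Δ (fun y => B y y) x = (2 : ℝ) • ∑ i, B (b i) (b i) := by
  have hB : ContDiff ℝ 2 fun y => B y y := by fun_prop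
  simp only [laplacian_eq_iteratedFDeriv_orthonormalBasis _ b, Finset.smul_sum, two_smul]
  refine Finset.sum_congr rfl fun i _ => ?_
  have hfd : (fun y => fderiv ℝ (fun y => B y y) y (b i)) = fun y => B y (b i) + B (b i) y := by
    ext y
    rw [fderiv_clm_apply (by fun_prop) (by fun_prop)]
    simp
  rw [← fderiv_fderiv_apply_eq_iteratedFDeriv hB.contDiffAt, hfd,
    fderiv_fun_add (by fun_prop) (by fun_prop), fderiv_clm_apply (by fun_prop) (by fun_prop)]
  simp

end Laplacian

section Poisson

variable {E F : Type*} [NormedAddCommGroup E] [InnerProductSpace ℝ E] [FiniteDimensional ℝ E]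
  [NormedAddCommGroup F] [NormedSpace ℝ F]

lemma laplacian_clm (ℓ : E →L[ℝ] F) (x : E) : Δ (fun y => ℓ y) x = 0 := by
  rw [laplacian_eq_iteratedFDeriv_stdOrthonormalBasis]
  simp [← fderiv_fderiv_apply_eq_iteratedFDeriv ℓ.contDiff.contDiffAt]

lemma laplacian_add_smul {f g : E → F} {x : E} (hf : ContDiffAt ℝ 2 f x) (hg : ContDiffAt ℝ 2 g x)
    (k : ℝ) : Δ (fun y => f y + k • g y) x = Δ f x + k • Δ g x := by
  rw [← laplacian_smul k hg]
  exact hf.laplacian_add (hg.const_smul k)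

lemma laplacian_norm_sq (x : E) :
    Δ (fun y : E => ‖y‖ ^ 2) x = 2 * Module.finrank ℝ E := by
  let b := stdOrthonormalBasis ℝ E
  have : Δ (fun y : E => inner ℝ y y) x = (2 : ℝ) • ∑ i, inner ℝ (b i) (b i) :=
    laplacian_bilin_diag b (innerSL ℝ) x
  simpa using this

lemma laplacian_norm_sub_sq (c x : E) :
    Δ (fun y : E => ‖y - c‖ ^ 2) x = 2 * Module.finrank ℝ E := by
  have := laplacian_comp_add_linearIsometryEquiv (fun y : E => ‖y‖ ^ 2) (-c) (.refl ℝ E) x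
  simpa [laplacian_norm_sq, neg_add_eq_sub] using this

theorem le_of_laplacian_nonneg_of_le_frontier [Nontrivial E] {U : Set E} {φ : E → ℝ} {C : ℝ}
    (hU : IsOpen U) (hbdd : Bornology.IsBounded U) (hcont : ContinuousOn φ (closure U))
    (hsmooth : ContDiffOn ℝ 2 φ U) (hΔ : ∀ x ∈ U, 0 ≤ Δ φ x) (hC : ∀ x ∈ frontier U, φ x ≤ C)
    {x : E} (hx : x ∈ closure U) : φ x ≤ C := by
  obtain ⟨K, hK⟩ := hbdd.closure.exists_norm_le
  refine le_of_forall_pos_le_add fun ε hε => ?_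
  obtain ⟨δ, hδ, hδK⟩ : ∃ δ > 0, δ * K ^ 2 ≤ ε :=
    ⟨ε / (K ^ 2 + 1), by positivity, by rw [div_mul_eq_mul_div, div_le_iff₀] <;> nlinarith⟩
  have hperturb : Continuous fun y : E => δ * ‖y‖ ^ 2 := by fun_prop
  obtain ⟨p, hp, hpmax⟩ := hbdd.isCompact_closure.exists_isMaxOn ⟨x, hx⟩
    (hcont.add hperturb.continuousOn)
  have hpU : p ∉ U := fun hpU => by
    have hφp : ContDiffAt ℝ 2 φ p := hsmooth.contDiffAt (hU.mem_nhds hpU)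
    have hsq : ContDiffAt ℝ 2 (fun y : E => ‖y‖ ^ 2) p := (contDiff_norm_sq ℝ).contDiffAt
    have hnonpos := laplacian_nonpos_of_isLocalMax (hφp.add (hsq.const_smul δ))
      (hpmax.isLocalMax (mem_of_superset (hU.mem_nhds hpU) subset_closure))
    rw [laplacian_add_smul hφp hsq, laplacian_norm_sq] at hnonpos
    have hdim : (0 : ℝ) < Module.finrank ℝ E := by exact_mod_cast Module.finrank_pos
    have hstrict : 0 < δ • (2 * (Module.finrank ℝ E : ℝ)) := by positivity
    linarith [hΔ p hpU]
  calc φ x ≤ φ x + δ * ‖x‖ ^ 2 := le_add_of_nonneg_right (by positivity)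
    _ ≤ φ p + δ * ‖p‖ ^ 2 := hpmax hx
    _ ≤ C + δ * K ^ 2 := by
      gcongr
      · exact hC p ⟨hp, hU.interior_eq.symm ▸ hpU⟩
      · exact hK p hp
    _ ≤ C + ε := by gcongr

/-- `PoissonBounds u c R M S`: on the ball of radius `R` about `c`, the function `u` solves a
Poisson equation whose right-hand side is bounded by `M`, with boundary values bounded by `S`.
The right-hand side is left anonymous, as only its bound is ever used. -/
structure PoissonBounds (u : E → F) (c : E) (R M S : ℝ) : Prop where
  continuousOn : ContinuousOn u (closedBall c R)
  contDiffOn : ContDiffOn ℝ 2 u (ball c R)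
  norm_laplacian_le : ∀ x ∈ ball c R, ‖Δ u x‖ ≤ M
  norm_le_of_mem_sphere : ∀ x ∈ sphere c R, ‖u x‖ ≤ S

namespace PoissonBounds

variable {G : Type*} [NormedAddCommGroup G] [NormedSpace ℝ G]
  {u v : E → F} {c c' x : E} {R R' M M' S S' : ℝ}

lemma contDiffAt (h : PoissonBounds u c R M S) (hx : x ∈ ball c R) : ContDiffAt ℝ 2 u x :=
  h.contDiffOn.contDiffAt (isOpen_ball.mem_nhds hx)

lemma differentiableAt (h : PoissonBounds u c R M S) (hx : x ∈ ball c R) :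
    DifferentiableAt ℝ u x :=
  (h.contDiffAt hx).differentiableAt two_ne_zero

lemma laplacian_bound_nonneg (h : PoissonBounds u c R M S) (hR : 0 < R) : 0 ≤ M :=
  (norm_nonneg _).trans (h.norm_laplacian_le c (mem_ball_self hR))

lemma sphere_bound_nonneg [Nontrivial E] (h : PoissonBounds u c R M S) (hR : 0 ≤ R) : 0 ≤ S :=
  have ⟨x, hx⟩ := NormedSpace.sphere_nonempty (x := c).mpr hR
  (norm_nonneg _).trans (h.norm_le_of_mem_sphere x hx)

lemma of_harmonicOnNhd (hu : HarmonicOnNhd u (closedBall c R)) (hS : ∀ x ∈ sphere c R, ‖u x‖ ≤ S) :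
    PoissonBounds u c R 0 S where
  continuousOn := hu.continuousOn
  contDiffOn := (hu.mono ball_subset_closedBall).contDiffOn
  norm_laplacian_le x hx := by simp [(hu x (ball_subset_closedBall hx)).2.self_of_nhds]
  norm_le_of_mem_sphere := hS

lemma mono (h : PoissonBounds u c R M S) (hM : M ≤ M') (hS : S ≤ S') :
    PoissonBounds u c R M' S' where
  continuousOn := h.continuousOn
  contDiffOn := h.contDiffOn
  norm_laplacian_le x hx := (h.norm_laplacian_le x hx).trans hM
  norm_le_of_mem_sphere x hx := (h.norm_le_of_mem_sphere x hx).trans hS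

lemma restrict (h : PoissonBounds u c R M S) (hR : R' + dist c' c ≤ R)
    (hS : ∀ x ∈ sphere c' R', ‖u x‖ ≤ S') : PoissonBounds u c' R' M S' where
  continuousOn := h.continuousOn.mono (closedBall_subset_closedBall' hR)
  contDiffOn := h.contDiffOn.mono (ball_subset_ball' hR)
  norm_laplacian_le x hx := h.norm_laplacian_le x (ball_subset_ball' hR hx)
  norm_le_of_mem_sphere := hS

lemma clm_comp (h : PoissonBounds u c R M S) (ℓ : F →L[ℝ] G) (hℓ : ‖ℓ‖ ≤ 1) :
    PoissonBounds (ℓ ∘ u) c R M S where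
  continuousOn := ℓ.continuous.comp_continuousOn h.continuousOn
  contDiffOn := ℓ.contDiff.comp_contDiffOn h.contDiffOn
  norm_laplacian_le x hx := by
    rw [(h.contDiffAt hx).laplacian_CLM_comp_left]
    exact (ℓ.le_of_opNorm_le hℓ _).trans ((one_mul _).trans_le (h.norm_laplacian_le x hx))
  norm_le_of_mem_sphere x hx :=
    (ℓ.le_of_opNorm_le hℓ _).trans ((one_mul _).trans_le (h.norm_le_of_mem_sphere x hx))

lemma sub (hu : PoissonBounds u c R M S) (hv : PoissonBounds v c R M' S') :
    PoissonBounds (u - v) c R (M + M') (S + S') where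
  continuousOn := hu.continuousOn.sub hv.continuousOn
  contDiffOn := hu.contDiffOn.sub hv.contDiffOn
  norm_laplacian_le x hx := by
    rw [(hu.contDiffAt hx).laplacian_sub (hv.contDiffAt hx)]
    exact norm_sub_le_of_le (hu.norm_laplacian_le x hx) (hv.norm_laplacian_le x hx)
  norm_le_of_mem_sphere x hx :=
    norm_sub_le_of_le (hu.norm_le_of_mem_sphere x hx) (hv.norm_le_of_mem_sphere x hx)

lemma sub_harmonic (hu : PoissonBounds u c R M S) (hv : HarmonicOnNhd v (closedBall c R))
    (hS : ∀ x ∈ sphere c R, ‖u x - v x‖ ≤ S') : PoissonBounds (u - v) c R M S' where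
  continuousOn := hu.continuousOn.sub hv.continuousOn
  contDiffOn := hu.contDiffOn.sub (hv.mono ball_subset_closedBall).contDiffOn
  norm_laplacian_le x hx := by
    have hvx := hv x (ball_subset_closedBall hx)
    rw [(hu.contDiffAt hx).laplacian_sub hvx.1, hvx.2.self_of_nhds, Pi.zero_apply, sub_zero]
    exact hu.norm_laplacian_le x hx
  norm_le_of_mem_sphere := hS

lemma comp_add_linearIsometryEquiv (h : PoissonBounds u c R M S) (L : E ≃ₗᵢ[ℝ] E) :
    PoissonBounds (fun x => u (c + L x)) 0 R M S where
  continuousOn := h.continuousOn.comp (by fun_prop) fun x hx => by simpa using hx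
  contDiffOn := h.contDiffOn.comp (contDiff_const.add L.contDiff).contDiffOn
    fun x hx => by simpa using hx
  norm_laplacian_le x hx := by
    rw [laplacian_comp_add_linearIsometryEquiv]
    exact h.norm_laplacian_le _ (by simpa using hx)
  norm_le_of_mem_sphere x hx := h.norm_le_of_mem_sphere _ (by simpa using hx)

theorem norm_le [Nontrivial E] (h : PoissonBounds u c R M S) (hR : R ≠ 0)
    (hx : x ∈ closedBall c R) :
    ‖u x‖ ≤ S + M / (2 * Module.finrank ℝ E) * (R ^ 2 - ‖x - c‖ ^ 2) := by
  obtain ⟨ℓ, hℓ, hℓx⟩ := exists_dual_vector'' ℝ (u x)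
  have hℓu := h.clm_comp ℓ hℓ
  set k : ℝ := M / (2 * Module.finrank ℝ E) with hk
  have hdim : (Module.finrank ℝ E : ℝ) ≠ 0 := by exact_mod_cast Module.finrank_pos.ne'
  have hsq : ContDiff ℝ 2 fun y : E => ‖y - c‖ ^ 2 := (contDiff_id.sub contDiff_const).norm_sq ℝ
  have hle := le_of_laplacian_nonneg_of_le_frontier (x := x) (C := S + k * R ^ 2) isOpen_ball
    isBounded_ball (φ := fun y => (ℓ ∘ u) y + k • ‖y - c‖ ^ 2)
    (closure_ball c hR ▸ hℓu.continuousOn.add (hsq.continuous.const_smul k).continuousOn)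
    (hℓu.contDiffOn.add (hsq.const_smul k).contDiffOn) (fun y hy => ?_) (fun y hy => ?_)
    (closure_ball c hR ▸ hx)
  · simp only [Function.comp_apply, hℓx, smul_eq_mul, RCLike.ofReal_real_eq_id, id_eq] at hle
    linarith
  · rw [laplacian_add_smul (hℓu.contDiffAt hy) hsq.contDiffAt, laplacian_norm_sub_sq, smul_eq_mul,
      hk, div_mul_cancel₀ _ (by positivity)]
    linarith [neg_le_of_abs_le (hℓu.norm_laplacian_le y hy)]
  · rw [frontier_ball c hR] at hy
    have hyu := le_of_abs_le (hℓu.norm_le_of_mem_sphere y hy)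
    rw [mem_sphere_iff_norm] at hy
    simpa [hy] using hyu

end PoissonBounds
end Poisson

section HalfBall

variable {E F : Type*} [NormedAddCommGroup E] [InnerProductSpace ℝ E]
  [NormedAddCommGroup F] [NormedSpace ℝ F]

/-- The barrier `a y (R - y) + b ‖x‖²` on the half-ball `{‖x‖ < R, 0 < y}`, where `y = ⟪e, x⟫`. It
dominates functions with bounded Laplacian that vanish on the hyperplane `y = 0`. -/
def halfBallBarrier (e : E) (R a b : ℝ) (x : E) : ℝ :=
  a * (inner ℝ e x * (R - inner ℝ e x)) + b * ‖x‖ ^ 2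

lemma mul_norm_sq_le_halfBallBarrier {e x : E} {R a : ℝ} (ha : 0 ≤ a) (he : ‖e‖ = 1)
    (hxR : ‖x‖ ≤ R) (hx : 0 ≤ inner ℝ e x) (b : ℝ) : b * ‖x‖ ^ 2 ≤ halfBallBarrier e R a b x := by
  have hinner : inner ℝ e x ≤ ‖x‖ := by simpa [he] using real_inner_le_norm e x
  exact le_add_of_nonneg_left
    (mul_nonneg ha (mul_nonneg hx (sub_nonneg.mpr (hinner.trans hxR))))

lemma contDiff_halfBallBarrier (e : E) (R a b : ℝ) : ContDiff ℝ 2 (halfBallBarrier e R a b) := by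
  have hinner : ContDiff ℝ 2 fun x : E => inner ℝ e x := contDiff_const.inner ℝ contDiff_id
  have hsq : ContDiff ℝ 2 fun x : E => ‖x‖ ^ 2 := contDiff_norm_sq ℝ
  unfold halfBallBarrier
  fun_prop

variable [FiniteDimensional ℝ E]

lemma laplacian_halfBallBarrier (e : E) (R a b : ℝ) (x : E) :
    Δ (halfBallBarrier e R a b) x = 2 * (Module.finrank ℝ E * b - ‖e‖ ^ 2 * a) := by
  let β := stdOrthonormalBasis ℝ E
  have hquad : Δ (fun y : E => inner ℝ e y * inner ℝ e y) x = 2 * ‖e‖ ^ 2 := by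
    have h := laplacian_bilin_diag β ((innerSL ℝ e).smulRight (innerSL ℝ e)) x
    have hsum : ∑ i, inner ℝ e (β i) * inner ℝ e (β i) = ‖e‖ ^ 2 := by
      simpa [real_inner_comm] using β.sum_inner_mul_inner e e
    simpa [hsum] using h
  have hlin : Δ (fun y : E => inner ℝ e y) x = 0 := laplacian_clm (innerSL ℝ e) x
  have heq : halfBallBarrier e R a b = fun y =>
      (a * R) • inner ℝ e y + (-a) • (inner ℝ e y * inner ℝ e y) + b • ‖y‖ ^ 2 := by
    ext y
    simp only [halfBallBarrier, smul_eq_mul]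
    ring
  have hlin_smooth : ContDiff ℝ 2 fun y : E => inner ℝ e y := contDiff_const.inner ℝ contDiff_id
  rw [heq, laplacian_add_smul (by fun_prop) (contDiff_norm_sq ℝ).contDiffAt,
    laplacian_add_smul (by fun_prop) (by fun_prop), hquad, laplacian_norm_sq]
  change Δ ((a * R) • fun y : E => inner ℝ e y) x + _ + _ = _
  rw [laplacian_smul _ hlin_smooth.contDiffAt, hlin]
  simp only [smul_eq_mul]
  ring

namespace PoissonBounds

variable {u : E → F} {w : E → ℝ} {c e : E} {R M S t : ℝ}

lemma le_halfBallBarrier_of_hyperplane (h : PoissonBounds w 0 R M S) (hR : 0 < R)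
    (he : ‖e‖ = 1) (hw : ∀ x, inner ℝ e x = 0 → w x = 0) {x : E} (hxR : ‖x‖ < R)
    (hx : 0 < inner ℝ e x) :
    w x ≤ halfBallBarrier e R (M / 2 + Module.finrank ℝ E * (S / R ^ 2)) (S / R ^ 2) x := by
  have : Nontrivial E := ⟨e, 0, by rintro rfl; simp at he⟩
  have hM := h.laplacian_bound_nonneg hR
  have hS := h.sphere_bound_nonneg hR.le
  set b := S / R ^ 2
  set a := M / 2 + Module.finrank ℝ E * b with ha
  set B := halfBallBarrier e R a b
  set U : Set E := {x | ‖x‖ < R ∧ 0 < inner ℝ e x}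
  have hUball : U ⊆ ball 0 R := fun y hy => by simpa using hy.1
  have hUopen : IsOpen U := .and (isOpen_lt (by fun_prop) (by fun_prop))
    (isOpen_lt (by fun_prop) (by fun_prop))
  have hclosure : closure U ⊆ {x | ‖x‖ ≤ R ∧ 0 ≤ inner ℝ e x} :=
    closure_minimal (fun y hy => ⟨hy.1.le, hy.2.le⟩)
      (.and (isClosed_le (by fun_prop) (by fun_prop)) (isClosed_le (by fun_prop) (by fun_prop)))
  have hB := contDiff_halfBallBarrier e R a b
  have hle := le_of_laplacian_nonneg_of_le_frontier (φ := fun y => w y + (-1 : ℝ) • B y) (C := 0)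
    hUopen (isBounded_ball.subset hUball)
    ((h.continuousOn.mono fun y hy => by simpa using (hclosure hy).1).add
      (hB.continuous.const_smul (-1 : ℝ)).continuousOn)
    ((h.contDiffOn.mono hUball).add (hB.const_smul _).contDiffOn)
    (fun y hy => ?_) (fun y hy => ?_) (subset_closure (show x ∈ U from ⟨hxR, hx⟩))
  · simp only [smul_eq_mul] at hle
    linarith
  · rw [laplacian_add_smul (h.contDiffAt (hUball hy)) hB.contDiffAt, laplacian_halfBallBarrier, he,
      smul_eq_mul]
    linarith [neg_le_of_abs_le (h.norm_laplacian_le y (hUball hy))]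
  · obtain ⟨hyR, hye⟩ := hclosure hy.1
    rw [hUopen.frontier_eq] at hy
    have hyB := mul_norm_sq_le_halfBallBarrier (a := a) (by positivity) he hyR hye b
    rw [smul_eq_mul, neg_one_mul]
    rcases hyR.lt_or_eq with hlt | hyR
    · have hzero : inner ℝ e y = 0 := le_antisymm (not_lt.mp fun hpos => hy.2 ⟨hlt, hpos⟩) hye
      have hb : 0 ≤ b * ‖y‖ ^ 2 := by positivity
      linarith [hw y hzero]
    · have hbS : b * ‖y‖ ^ 2 = S := by rw [hyR, div_mul_cancel₀ _ (by positivity)]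
      linarith [le_of_abs_le (h.norm_le_of_mem_sphere y (by simpa using hyR))]

lemma norm_sub_reflection_le (h : PoissonBounds u c R M S) (he : ‖e‖ = 1) (ht : 0 < t)
    (htR : t < R) : ‖u (c + t • e) - u (c - t • e)‖ ≤
      2 * ((M / 2 + Module.finrank ℝ E * (S / R ^ 2)) * (t * (R - t)) + S / R ^ 2 * t ^ 2) := by
  let σ : E ≃ₗᵢ[ℝ] E := (ℝ ∙ e)ᗮ.reflection
  have hσ : ∀ x, inner ℝ e x = 0 → σ x = x := fun x hx =>
    Submodule.reflection_mem_subspace_eq_self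
      (Submodule.mem_orthogonal_singleton_iff_inner_right.mpr hx)
  have hσe : σ e = -e := Submodule.reflection_orthogonalComplement_singleton_eq_neg e
  obtain ⟨ℓ, hℓ, hℓu⟩ := exists_dual_vector'' ℝ (u (c + t • e) - u (c - t • e))
  have hodd := ((h.comp_add_linearIsometryEquiv (.refl ℝ E)).sub
    (h.comp_add_linearIsometryEquiv σ)).clm_comp ℓ hℓ
  have hle := hodd.le_halfBallBarrier_of_hyperplane (x := t • e) (ht.trans htR) he
    (fun x hx => by simp [hσ x hx]) (by simpa [norm_smul, he, abs_of_pos ht] using htR)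
    (by simpa [inner_smul_right, he] using ht)
  simp only [halfBallBarrier, Function.comp_apply, Pi.sub_apply, LinearIsometryEquiv.coe_refl,
    id_eq, map_smul σ, hσe, smul_neg, ← sub_eq_add_neg, hℓu, inner_smul_right,
    real_inner_self_eq_norm_sq, norm_smul, he, Real.norm_eq_abs, abs_of_pos ht] at hle
  refine hle.trans_eq ?_
  ring

theorem norm_fderiv_center_le [Nontrivial E] (h : PoissonBounds u c R M S) (hR : 0 < R) :
    ‖fderiv ℝ u c‖ ≤ M * R / 2 + Module.finrank ℝ E * (S / R) := by
  have hM := h.laplacian_bound_nonneg hR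
  refine ContinuousLinearMap.opNorm_le_of_unit_norm ?_ fun e he => ?_
  · have := h.sphere_bound_nonneg hR.le
    positivity
  set b := S / R ^ 2
  set a := M / 2 + Module.finrank ℝ E * b
  have hline : ∀ s : ℝ, HasDerivAt (fun t : ℝ => u (c + t • (s • e))) (fderiv ℝ u c (s • e)) 0 :=
    fun s => (h.differentiableAt (mem_ball_self hR)).hasFDerivAt.hasLineDerivAt (s • e)
  have hdiff :
      HasDerivAt (fun t : ℝ => u (c + t • e) - u (c - t • e)) ((2 : ℝ) • fderiv ℝ u c e) 0 := by
    simpa [two_smul, sub_eq_add_neg] using (hline 1).fun_sub (hline (-1))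
  have hslope : ∀ᶠ t : ℝ in 𝓝[>] 0, ‖t⁻¹ • (u (c + t • e) - u (c - t • e))‖ ≤
      2 * (a * (R - t) + b * t) := by
    filter_upwards [Ioo_mem_nhdsGT hR] with t ht
    rw [norm_smul, norm_inv, Real.norm_of_nonneg ht.1.le, inv_mul_le_iff₀ ht.1]
    refine (h.norm_sub_reflection_le he ht.1 ht.2).trans_eq ?_
    ring
  have hlim : Tendsto (fun t : ℝ => 2 * (a * (R - t) + b * t)) (𝓝[>] 0) (𝓝 (2 * (a * R))) := by
    have : Continuous fun t : ℝ => 2 * (a * (R - t) + b * t) := by fun_prop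
    simpa using (this.tendsto 0).mono_left nhdsWithin_le_nhds
  have hnorm :=
    le_of_tendsto_of_tendsto (by simpa using hdiff.tendsto_slope_zero_right.norm) hlim hslope
  rw [norm_smul, Real.norm_two] at hnorm
  calc ‖fderiv ℝ u c e‖ ≤ a * R := by linarith
    _ = M * R / 2 + Module.finrank ℝ E * (S / R) := by simp only [a, b]; field_simp

end PoissonBounds

end HalfBall

section RealPart

lemma integral_abs_cos_nat_mul_add {n : ℕ} (hn : n ≠ 0) (a : ℝ) :
    ∫ t in (0 : ℝ)..2 * Real.pi, |Real.cos (n * t + a)| = 4 := by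
  have hn' : (n : ℝ) ≠ 0 := Nat.cast_ne_zero.mpr hn
  have hperiodic : Function.Periodic (fun x => |Real.cos x|) Real.pi := fun x => by
    simp [Real.cos_add_pi]
  have hperiod : ∫ x in (-(Real.pi / 2))..(-(Real.pi / 2) + Real.pi), |Real.cos x| = 2 := by
    rw [show -(Real.pi / 2) + Real.pi = Real.pi / 2 by ring]
    calc ∫ x in (-(Real.pi / 2))..(Real.pi / 2), |Real.cos x|
        = ∫ x in (-(Real.pi / 2))..(Real.pi / 2), Real.cos x :=
          intervalIntegral.integral_congr fun x hx => abs_of_nonneg <|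
            Real.cos_nonneg_of_mem_Icc (uIcc_of_le (neg_le_self Real.pi_div_two_pos.le) ▸ hx)
      _ = 2 := by rw [integral_cos]; norm_num
  have hperiods := hperiodic.intervalIntegral_add_zsmul_eq (2 * n) a
    fun _ _ => Continuous.intervalIntegrable (by fun_prop) _ _
  have hend : a + (2 * n : ℤ) • Real.pi = n * (2 * Real.pi) + a := by
    simp only [zsmul_eq_mul]
    push_cast
    ring
  rw [intervalIntegral.integral_comp_mul_add (fun x => |Real.cos x|) hn', mul_zero, zero_add,
    ← hend, hperiods, hperiodic.intervalIntegral_add_eq a, hperiod]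
  simp only [zsmul_eq_mul, smul_eq_mul]
  push_cast
  field_simp
  norm_num

variable {F : ℂ → ℂ} {c z : ℂ} {R S : ℝ} {n : ℕ}

lemma circleAverage_inv_pow_mul (hF : DiffContOnCl ℂ F (ball c R)) (hR : 0 < R) (n : ℕ) :
    Real.circleAverage (fun z => ((z - c) ^ n)⁻¹ * F z) c R =
      iteratedDeriv n F c / n.factorial := by
  rw [Real.circleAverage_eq_circleIntegral hR.ne']
  have hcauchy := hF.circleIntegral_one_div_sub_center_pow_smul hR n
  simp only [smul_eq_mul, one_div, pow_succ', mul_inv, mul_assoc] at hcauchy ⊢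
  rw [hcauchy]
  field_simp [Complex.two_pi_I_ne_zero]

lemma circleAverage_pow_mul_eq_zero (hF : DiffContOnCl ℂ F (ball c R)) (hR : 0 < R) (hn : n ≠ 0) :
    Real.circleAverage (fun z => (z - c) ^ n * F z) c R = 0 := by
  have hpow : DiffContOnCl ℂ (fun z => (z - c) ^ n * F z) (ball c |R|) := by
    rw [abs_of_pos hR]
    exact (Differentiable.diffContOnCl (f := fun z => (z - c) ^ n) (by fun_prop)).smul hF
  simpa [hn] using hpow.circleAverage

lemma continuousOn_inv_sub_pow_sphere (c : ℂ) (hR : R ≠ 0) (n : ℕ) :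
    ContinuousOn (fun z => ((z - c) ^ n)⁻¹) (sphere c R) :=
  ContinuousOn.inv₀ (by fun_prop) fun _ hz =>
    pow_ne_zero n (sub_ne_zero.mpr (ne_of_mem_sphere hz hR))

lemma circleIntegrable_inv_pow_add_pow_mul (hF : ContinuousOn F (sphere c R)) (hR : 0 < R) (n : ℕ)
    (p q : ℂ) : CircleIntegrable (fun z => (p * ((z - c) ^ n)⁻¹ + q * (z - c) ^ n) * F z) c R := by
  have := continuousOn_inv_sub_pow_sphere c hR.ne' n
  exact ContinuousOn.circleIntegrable hR.le (by fun_prop)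

lemma circleAverage_inv_pow_add_pow_mul (hF : DiffContOnCl ℂ F (ball c R)) (hR : 0 < R) (hn : n ≠ 0)
    (p q : ℂ) : Real.circleAverage (fun z => (p * ((z - c) ^ n)⁻¹ + q * (z - c) ^ n) * F z) c R =
      p * (iteratedDeriv n F c / n.factorial) := by
  have hcont : ContinuousOn F (sphere c R) := hF.continuousOn_ball.mono sphere_subset_closedBall
  have hinv := continuousOn_inv_sub_pow_sphere c hR.ne' n
  simp only [add_mul, mul_assoc]
  rw [Real.circleAverage_fun_add (ContinuousOn.circleIntegrable hR.le (by fun_prop))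
    (ContinuousOn.circleIntegrable hR.le (by fun_prop))]
  simp only [← smul_eq_mul p, ← smul_eq_mul q]
  rw [Real.circleAverage_fun_smul, Real.circleAverage_fun_smul, circleAverage_inv_pow_mul hF hR,
    circleAverage_pow_mul_eq_zero hF hR hn, smul_zero, add_zero]

lemma inv_pow_add_pow_circleMap (hR : R ≠ 0) (c : ℂ) (n : ℕ) (θ t : ℝ) :
    (Complex.exp (θ * Complex.I))⁻¹ * R ^ n * ((circleMap c R t - c) ^ n)⁻¹ +
      Complex.exp (θ * Complex.I) * (R ^ n)⁻¹ * (circleMap c R t - c) ^ n =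
      (2 * Real.cos (n * t + θ) : ℝ) := by
  have hRn : (R : ℂ) ^ n ≠ 0 := by exact_mod_cast pow_ne_zero n hR
  have hexp : Complex.exp (θ * Complex.I) * Complex.exp (t * Complex.I) ^ n =
      Complex.exp ((n * t + θ : ℝ) * Complex.I) := by
    rw [← Complex.exp_nat_mul, ← Complex.exp_add]
    push_cast
    ring_nf
  push_cast at hexp ⊢
  rw [Complex.two_cos, neg_mul, Complex.exp_neg (_ * _), ← hexp, circleMap_sub_center,
    circleMap_zero, mul_pow, add_comm]
  field_simp

-- On the circle, `ζ⁻ⁿ` and `ζⁿ` are conjugate, so averaging `F` against the real kernel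
-- `2 Re (w ζ⁻ⁿ)` picks out the `n`-th Taylor coefficient while only seeing `Re F`.
theorem norm_iteratedDeriv_le_of_abs_re_le (hF : DiffContOnCl ℂ F (ball c R)) (hR : 0 < R)
    (hS : ∀ z ∈ sphere c R, |(F z).re| ≤ S) (hn : n ≠ 0) :
    ‖iteratedDeriv n F c / n.factorial‖ * R ^ n ≤ 4 / Real.pi * S := by
  set A := iteratedDeriv n F c / n.factorial
  set w := Complex.exp (A.arg * Complex.I) with hw
  have hwA : w⁻¹ * A = ‖A‖ := by
    rw [inv_mul_eq_iff_eq_mul₀ (Complex.exp_ne_zero _), mul_comm, Complex.norm_mul_exp_arg_mul_I]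
  set K : ℂ → ℂ := fun z => w⁻¹ * R ^ n * ((z - c) ^ n)⁻¹ + w * (R ^ n)⁻¹ * (z - c) ^ n
  have hcos : ∀ t, K (circleMap c R t) = (2 * Real.cos (n * t + A.arg) : ℝ) :=
    inv_pow_add_pow_circleMap hR.ne' c n A.arg
  have havg : Real.circleAverage (fun z => K z * F z) c R = (‖A‖ * R ^ n : ℝ) := by
    rw [circleAverage_inv_pow_add_pow_mul hF hR hn, mul_right_comm, hwA]
    push_cast
    rfl
  have hre := Complex.reCLM.circleAverage_comp_comm (circleIntegrable_inv_pow_add_pow_mul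
    (hF.continuousOn_ball.mono sphere_subset_closedBall) hR n (w⁻¹ * R ^ n) (w * (R ^ n)⁻¹))
  rw [havg, Complex.reCLM_apply, Complex.ofReal_re] at hre
  have hbound : ∀ t : ℝ, ‖(K (circleMap c R t) * F (circleMap c R t)).re‖ ≤
      2 * |Real.cos (n * t + A.arg)| * S := fun t => by
    simp only [hcos, Complex.re_ofReal_mul, norm_mul, Real.norm_eq_abs, abs_two]
    gcongr
    exact hS _ (circleMap_mem_sphere c hR.le t)
  rw [← hre, Real.circleAverage_def, smul_eq_mul]
  calc (2 * Real.pi)⁻¹ * ∫ t in (0 : ℝ)..2 * Real.pi, (K (circleMap c R t) * F (circleMap c R t)).re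
      ≤ (2 * Real.pi)⁻¹ * ∫ t in (0 : ℝ)..2 * Real.pi, 2 * |Real.cos (n * t + A.arg)| * S := by
        gcongr
        exact (Real.le_norm_self _).trans (intervalIntegral.norm_integral_le_of_norm_le
          (by positivity) (.of_forall fun t _ => hbound t)
          (Continuous.intervalIntegrable (by fun_prop) _ _))
    _ = 4 / Real.pi * S := by
        rw [intervalIntegral.integral_mul_const, intervalIntegral.integral_const_mul,
          integral_abs_cos_nat_mul_add hn]
        field_simp

theorem norm_deriv_le_of_abs_re_le (hF : DiffContOnCl ℂ F (ball c R)) (hR : 0 < R)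
    (hS : ∀ z ∈ sphere c R, |(F z).re| ≤ S) : ‖deriv F c‖ ≤ 4 / Real.pi * S / R := by
  rw [le_div_iff₀ hR]
  simpa using norm_iteratedDeriv_le_of_abs_re_le hF hR hS one_ne_zero

theorem norm_deriv_sub_le_of_abs_re_le (hF : DiffContOnCl ℂ F (ball c R))
    (hS : ∀ z ∈ sphere c R, |(F z).re| ≤ S) (hz : z ∈ ball c R) :
    ‖deriv F z - deriv F c‖ ≤ 4 / Real.pi * S / R * (1 / (1 - ‖z - c‖ / R) ^ 2 - 1) := by
  have hR : 0 < R := pos_of_mem_ball hz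
  have ht : ‖z - c‖ / R < 1 := (div_lt_one hR).mpr (mem_ball_iff_norm.mp hz)
  have htaylor := Complex.hasSum_taylorSeries_on_ball (hF.differentiableOn.deriv isOpen_ball) hz
  have hmajorant := (hasSum_choose_mul_geometric_of_norm_lt_one (𝕜 := ℝ) 1 (r := ‖z - c‖ / R)
    (by rwa [Real.norm_of_nonneg (by positivity)])).mul_left (4 / Real.pi * S / R)
  rw [← hasSum_nat_add_iff' 1] at htaylor hmajorant
  have hterm : ∀ n : ℕ, ‖(n.factorial : ℂ)⁻¹ • (z - c) ^ n • iteratedDeriv n (deriv F) c‖ ≤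
      4 / Real.pi * S / R * (((n + 1).choose 1 : ℝ) * (‖z - c‖ / R) ^ n) := fun n => by
    have hcoeff := norm_iteratedDeriv_le_of_abs_re_le hF hR hS n.succ_ne_zero
    calc ‖(n.factorial : ℂ)⁻¹ • (z - c) ^ n • iteratedDeriv n (deriv F) c‖
        = ‖iteratedDeriv (n + 1) F c / (n + 1).factorial‖ * R ^ (n + 1) / R *
            (((n + 1).choose 1 : ℝ) * (‖z - c‖ / R) ^ n) := by
          rw [iteratedDeriv_succ', Nat.factorial_succ, Nat.choose_one_right, pow_succ, div_pow]
          simp only [smul_eq_mul, norm_mul, norm_inv, norm_pow, norm_div, Complex.norm_natCast,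
            Nat.cast_mul]
          field_simp
      _ ≤ _ := by gcongr
  convert htaylor.norm_le_of_bounded hmajorant fun n => hterm (n + 1) using 1
  · simp
  · simp [mul_sub]

end RealPart

section Harmonic

variable {F : Type*} [NormedAddCommGroup F] [NormedSpace ℝ F]
  {h : ℂ → F} {c z : ℂ} {R S : ℝ}

lemma exists_analyticOnNhd_closedBall_re_eq {φ : ℂ → ℝ} (hφ : HarmonicOnNhd φ (closedBall c R))
    (hR : 0 ≤ R) :
    ∃ G : ℂ → ℂ, AnalyticOnNhd ℂ G (closedBall c R) ∧ ∀ z ∈ closedBall c R, (G z).re = φ z := by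
  obtain ⟨ε, hε, hsub⟩ := (isCompact_closedBall c R).exists_thickening_subset_open
    (isOpen_setOfPred_harmonicAt φ) hφ
  rw [thickening_closedBall hε hR] at hsub
  have hball : closedBall c R ⊆ ball c (ε + R) := closedBall_subset_ball (by linarith)
  obtain ⟨G, hG, hre⟩ := HarmonicOnNhd.exists_analyticOnNhd_ball_re_eq hsub
  exact ⟨G, hG.mono hball, fun z hz => hre (hball hz)⟩

lemma exists_diffContOnCl_clm_fderiv_eq_re_deriv (hh : HarmonicOnNhd h (closedBall c R))
    (hR : 0 ≤ R) (hS : ∀ z ∈ sphere c R, ‖h z‖ ≤ S) (ℓ : F →L[ℝ] ℝ) (hℓ : ‖ℓ‖ ≤ 1) :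
    ∃ G : ℂ → ℂ, DiffContOnCl ℂ G (ball c R) ∧ (∀ z ∈ sphere c R, |(G z).re| ≤ S) ∧
      ∀ z ∈ ball c R, ∀ e, ℓ (fderiv ℝ h z e) = (deriv G z * e).re := by
  obtain ⟨G, hG, hre⟩ := exists_analyticOnNhd_closedBall_re_eq (hh.comp_CLM ℓ) hR
  refine ⟨G, (hG.differentiableOn.mono closure_ball_subset_closedBall).diffContOnCl,
    fun z hz => ?_, fun z hz e => ?_⟩
  · rw [hre z (sphere_subset_closedBall hz)]
    exact (ℓ.le_of_opNorm_le hℓ _).trans ((one_mul _).trans_le (hS z hz))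
  · have hz' := ball_subset_closedBall hz
    have heq : (fun z => (G z).re) =ᶠ[𝓝 z] ℓ ∘ h :=
      eventually_of_mem (isOpen_ball.mem_nhds hz) fun w hw => hre w (ball_subset_closedBall hw)
    have hGz := (hG z hz').differentiableAt.hasDerivAt.hasFDerivAt.restrictScalars ℝ
    have hℓh := ℓ.hasFDerivAt.comp z ((hh z hz').1.differentiableAt two_ne_zero).hasFDerivAt
    have := ((Complex.reCLM.hasFDerivAt.comp z hGz).congr_of_eventuallyEq heq.symm).unique hℓh
    simpa [mul_comm] using (congr($this e)).symm

theorem norm_fderiv_le_of_harmonicOnNhd (hh : HarmonicOnNhd h (closedBall c R)) (hR : 0 < R)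
    (hS : ∀ z ∈ sphere c R, ‖h z‖ ≤ S) : ‖fderiv ℝ h c‖ ≤ 4 / Real.pi * S / R := by
  have hS0 := (PoissonBounds.of_harmonicOnNhd hh hS).sphere_bound_nonneg hR.le
  refine ContinuousLinearMap.opNorm_le_bound _ (by positivity) fun e => ?_
  obtain ⟨ℓ, hℓ, hℓe⟩ := exists_dual_vector'' ℝ (fderiv ℝ h c e)
  obtain ⟨G, hG, hGS, hderiv⟩ := exists_diffContOnCl_clm_fderiv_eq_re_deriv hh hR.le hS ℓ hℓ
  calc ‖fderiv ℝ h c e‖ = (deriv G c * e).re := by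
        rw [← hderiv c (mem_ball_self hR), hℓe, RCLike.ofReal_real_eq_id, id]
    _ ≤ ‖deriv G c‖ * ‖e‖ := (Complex.re_le_norm _).trans (norm_mul_le _ _)
    _ ≤ 4 / Real.pi * S / R * ‖e‖ := by gcongr; exact norm_deriv_le_of_abs_re_le hG hR hGS

theorem norm_fderiv_sub_le_of_harmonicOnNhd (hh : HarmonicOnNhd h (closedBall c R))
    (hS : ∀ z ∈ sphere c R, ‖h z‖ ≤ S) (hz : z ∈ ball c R) :
    ‖fderiv ℝ h z - fderiv ℝ h c‖ ≤ 4 / Real.pi * S / R * (1 / (1 - ‖z - c‖ / R) ^ 2 - 1) := by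
  have hR : 0 < R := pos_of_mem_ball hz
  have hS0 := (PoissonBounds.of_harmonicOnNhd hh hS).sphere_bound_nonneg hR.le
  have ht : ‖z - c‖ / R < 1 := (div_lt_one hR).mpr (mem_ball_iff_norm.mp hz)
  have hgrowth : 1 ≤ 1 / (1 - ‖z - c‖ / R) ^ 2 := one_le_one_div
    (by have := sub_pos.mpr ht; positivity)
    (pow_le_one₀ (sub_nonneg.mpr ht.le) (sub_le_self _ (by positivity)))
  refine ContinuousLinearMap.opNorm_le_bound _
    (mul_nonneg (by positivity) (sub_nonneg.mpr hgrowth)) fun e => ?_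
  obtain ⟨ℓ, hℓ, hℓe⟩ := exists_dual_vector'' ℝ ((fderiv ℝ h z - fderiv ℝ h c) e)
  obtain ⟨G, hG, hGS, hderiv⟩ := exists_diffContOnCl_clm_fderiv_eq_re_deriv hh hR.le hS ℓ hℓ
  calc ‖(fderiv ℝ h z - fderiv ℝ h c) e‖ = ((deriv G z - deriv G c) * e).re := by
        rw [sub_mul, Complex.sub_re, ← hderiv z hz, ← hderiv c (mem_ball_self hR), ← map_sub,
          ← sub_apply, hℓe, RCLike.ofReal_real_eq_id, id]
    _ ≤ ‖deriv G z - deriv G c‖ * ‖e‖ := (Complex.re_le_norm _).trans (norm_mul_le _ _)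
    _ ≤ _ := by gcongr; exact norm_deriv_sub_le_of_abs_re_le hG hGS hz

end Harmonic

section Approximation

variable {c : ℂ} {R ε : ℝ}

lemma exists_harmonic_eq_fourier (c : ℂ) (hR : R ≠ 0) (n : ℤ) : ∃ h : ℂ → ℂ,
    HarmonicOnNhd h univ ∧ ∀ x : UnitAddCircle, h (c + R * x.toCircle) = fourier n x := by
  have hRC : (R : ℂ) ≠ 0 := by exact_mod_cast hR
  have hanalytic : ∀ (m : ℕ) (z : ℂ), AnalyticAt ℂ (fun z => ((z - c) / R) ^ m) z := fun m z => by
    fun_prop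
  obtain ⟨m, rfl | rfl⟩ := n.eq_nat_or_neg
  · exact ⟨fun z => ((z - c) / R) ^ m, fun z _ => (hanalytic m z).harmonicAt, fun x => by
      simp [fourier_apply, AddCircle.toCircle_nsmul, hRC]⟩
  · refine ⟨_, fun z _ => (hanalytic m z).harmonicAt_conj, fun x => by
      simp [fourier_apply, AddCircle.toCircle_nsmul, AddCircle.toCircle_neg, hRC,
        ← Circle.coe_inv_eq_conj]⟩

lemma exists_harmonic_eq_of_mem_span_fourier (c : ℂ) (hR : R ≠ 0) {φ : C(UnitAddCircle, ℂ)}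
    (hφ : φ ∈ Submodule.span ℂ (range fourier)) :
    ∃ h : ℂ → ℂ, HarmonicOnNhd h univ ∧ ∀ x : UnitAddCircle, h (c + R * x.toCircle) = φ x := by
  induction hφ using Submodule.span_induction with
  | mem φ hφ =>
    obtain ⟨n, rfl⟩ := hφ
    exact exists_harmonic_eq_fourier c hR n
  | zero => exact ⟨fun _ => 0, harmonicOnNhd_const 0, fun _ => rfl⟩
  | add φ₁ φ₂ _ _ ih₁ ih₂ =>
    obtain ⟨h₁, hh₁, heq₁⟩ := ih₁
    obtain ⟨h₂, hh₂, heq₂⟩ := ih₂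
    exact ⟨h₁ + h₂, hh₁.add hh₂, fun x => congr($(heq₁ x) + $(heq₂ x))⟩
  | smul a φ _ ih =>
    obtain ⟨h, hh, heq⟩ := ih
    exact ⟨_, hh.comp_CLM (ContinuousLinearMap.mul ℝ ℂ a), fun x => congr(a * $(heq x))⟩

theorem exists_harmonic_norm_sub_le {ψ : ℂ → ℂ} (hψ : ContinuousOn ψ (sphere c R)) (hR : 0 < R)
    (hε : 0 < ε) :
    ∃ h : ℂ → ℂ, HarmonicOnNhd h univ ∧ ∀ z ∈ sphere c R, ‖ψ z - h z‖ ≤ ε := by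
  let φ : C(UnitAddCircle, ℂ) := ⟨fun x => ψ (c + R * x.toCircle),
    hψ.comp_continuous (by fun_prop) fun x => by simp [Circle.norm_coe, abs_of_pos hR]⟩
  have hφ : φ ∈ (Submodule.span ℂ (range (fourier (T := 1)))).topologicalClosure :=
    span_fourier_closure_eq_top (T := 1) ▸ Submodule.mem_top
  obtain ⟨φ', hφ', hdist⟩ := Metric.mem_closure_iff.mp hφ ε hε
  obtain ⟨h, hh, heq⟩ := exists_harmonic_eq_of_mem_span_fourier c hR.ne' hφ'
  refine ⟨h, hh, fun z hz => ?_⟩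
  have hunit : (z - c) / R ∈ Submonoid.unitSphere ℂ := by
    simp [Submonoid.unitSphere, mem_sphere_iff_norm.mp hz, abs_of_pos hR, hR.ne']
  obtain ⟨x, hx⟩ := (AddCircle.homeomorphCircle one_ne_zero).surjective (⟨_, hunit⟩ : Circle)
  rw [AddCircle.homeomorphCircle_apply] at hx
  have hRC : (R : ℂ) ≠ 0 := by exact_mod_cast hR.ne'
  have hzx : z = c + R * x.toCircle := by rw [hx, mul_div_cancel₀ _ hRC, add_sub_cancel]
  rw [hzx, heq]
  exact ((φ - φ').norm_coe_le_norm x).trans (dist_eq_norm φ φ' ▸ hdist.le)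

end Approximation

section GradientOscillation

lemma le_of_forall_pos_le_of_continuousAt {a : ℝ} {φ : ℝ → ℝ} (hφ : ContinuousAt φ 0)
    (h : ∀ ε > 0, a ≤ φ ε) : a ≤ φ 0 :=
  ge_of_tendsto (hφ.tendsto.mono_left (nhdsWithin_le_nhds (s := Ioi 0)))
    (eventually_mem_nhdsWithin.mono h)

lemma four_div_pi_lt : 4 / Real.pi < 1.274 := by
  rw [div_lt_iff₀ Real.pi_pos]
  linarith [Real.pi_gt_d2]

lemma mul_log_four_div_le {r R : ℝ} (hr : 0 ≤ r) (hrR : r ≤ R) (hR : R ≤ 1) :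
    r * Real.log (4 / r) ≤ R * Real.log (4 / R) := by
  rcases hr.eq_or_lt with rfl | hr
  · rw [zero_mul]
    rcases hrR.eq_or_lt with rfl | hR0
    · simp
    · exact mul_nonneg hrR (Real.log_nonneg ((one_le_div hR0).2 (by linarith)))
  have hexp : Real.exp 1 ≤ 4 / R := by
    rw [le_div_iff₀ (hr.trans_le hrR)]
    nlinarith [Real.exp_one_lt_three]
  have hle : 4 / R ≤ 4 / r := by gcongr
  have hanti : Real.log (4 / r) / (4 / r) ≤ Real.log (4 / R) / (4 / R) :=
    Real.log_div_self_antitoneOn hexp (hexp.trans hle) hle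
  rw [div_div_eq_mul_div, div_div_eq_mul_div] at hanti
  linarith

lemma seven_fifths_le_mul_log {t : ℝ} (ht : 1 / 10 ≤ t) (ht' : t ≤ 1) :
    7 / 5 ≤ 4 * (t * Real.log (4 / t)) := by
  have hlog : 3.5 ≤ Real.log (4 / (1 / 10)) := by
    rw [show (4 : ℝ) / (1 / 10) = 2 ^ 5 * (5 / 4) by norm_num,
      Real.log_mul (by norm_num) (by norm_num), Real.log_pow]
    have := Real.one_sub_inv_le_log_of_pos (show (0 : ℝ) < 5 / 4 by norm_num)
    push_cast
    linarith [Real.log_two_gt_d9]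
  linarith [mul_log_four_div_le (by norm_num) ht ht']

namespace PoissonBounds

variable {u : ℂ → ℂ} {c z : ℂ} {R M S ε : ℝ}

lemma exists_harmonic_sub (hu : PoissonBounds u c R M S) (hR : 0 < R) (hε : 0 < ε) :
    ∃ h : ℂ → ℂ, HarmonicOnNhd h univ ∧ (∀ z ∈ sphere c R, ‖h z‖ ≤ S + ε) ∧
      PoissonBounds (u - h) c R M ε := by
  obtain ⟨h, hh, happrox⟩ := exists_harmonic_norm_sub_le
    (hu.continuousOn.mono sphere_subset_closedBall) hR hε
  exact ⟨h, hh, fun z hz => (norm_le_norm_add_norm_sub _ _).trans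
    (add_le_add (hu.norm_le_of_mem_sphere z hz) (happrox z hz)),
    hu.sub_harmonic (hh.mono (subset_univ _)) happrox⟩

theorem norm_fderiv_center_le_sharp (hu : PoissonBounds u c R M S) (hR : 0 < R) :
    ‖fderiv ℝ u c‖ ≤ 4 / Real.pi * S / R + M * R / 2 := by
  suffices ∀ ε > 0, ‖fderiv ℝ u c‖ ≤ 4 / Real.pi * (S + ε) / R + (M * R / 2 + 2 * (ε / R)) by
    simpa using le_of_forall_pos_le_of_continuousAt (by fun_prop) this
  intro ε hε
  obtain ⟨h, hh, hhS, hv⟩ := hu.exists_harmonic_sub hR hε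
  have hc : c ∈ ball c R := mem_ball_self hR
  have hh' := norm_fderiv_le_of_harmonicOnNhd (hh.mono (subset_univ _)) hR hhS
  have hv' := hv.norm_fderiv_center_le hR
  have hdiff : DifferentiableAt ℝ h c := (hh c (mem_univ c)).1.differentiableAt two_ne_zero
  have hsplit : fderiv ℝ u c = fderiv ℝ h c + fderiv ℝ (u - h) c := by
    rw [fderiv_sub (hu.differentiableAt hc) hdiff, add_sub_cancel]
  rw [Complex.finrank_real_complex] at hv'
  rw [hsplit]
  exact norm_add_le_of_le hh' (mod_cast hv')

theorem norm_fderiv_le (hu : PoissonBounds u c R M S) (hz : z ∈ ball c R) :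
    ‖fderiv ℝ u z‖ ≤
      4 / Real.pi * (S + M * R ^ 2 / 4) / (R - dist z c) + M * (R - dist z c) / 2 := by
  have hR : 0 < R := pos_of_mem_ball hz
  have hM := hu.laplacian_bound_nonneg hR
  refine norm_fderiv_center_le_sharp (hu.restrict (by linarith) fun x hx => ?_)
    (sub_pos.2 (mem_ball.1 hz))
  have hx : x ∈ closedBall c R :=
    closedBall_subset_closedBall' (by linarith) (sphere_subset_closedBall hx)
  have := hu.norm_le hR.ne' hx
  rw [Complex.finrank_real_complex] at this
  push_cast at this
  nlinarith [mul_nonneg hM (sq_nonneg ‖x - c‖)]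

-- The boundary bound `M R² / 1000` is small enough for the numerical estimates, and scales with `R`
-- so that halving the radius reproduces the hypothesis.
lemma norm_fderiv_sub_le_of_tenth_le (hu : PoissonBounds u c R M (M * R ^ 2 / 1000))
    (hR : 0 < R) (hz : R / 10 ≤ dist z c) (hz' : dist z c ≤ R / 2) :
    ‖fderiv ℝ u z - fderiv ℝ u c‖ ≤ 4 * M * (dist z c * Real.log (4 * R / dist z c)) := by
  have hM := hu.laplacian_bound_nonneg hR
  have hMR : 0 ≤ M * R := by positivity
  set r := dist z c
  have hz_le : ‖fderiv ℝ u z‖ ≤ 0.896 * (M * R) := by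
    have hρ : 0 < R - r := by linarith
    refine (hu.norm_fderiv_le (mem_ball.2 (by linarith))).trans ?_
    calc 4 / Real.pi * (M * R ^ 2 / 1000 + M * R ^ 2 / 4) / (R - r) + M * (R - r) / 2
        ≤ 1.274 * (M * R ^ 2 / 1000 + M * R ^ 2 / 4) / (R - r) + M * (R - r) / 2 := by
          gcongr
          exact four_div_pi_lt.le
      _ = M * ((0.319774 * R ^ 2 + (R - r) ^ 2 / 2) / (R - r)) := by field_simp; ring
      _ ≤ M * (0.896 * R) := by
          gcongr
          rw [div_le_iff₀ hρ]
          nlinarith [mul_nonneg (sub_nonneg.2 hz) (sub_nonneg.2 hz')]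
      _ = 0.896 * (M * R) := by ring
  have hc_le : ‖fderiv ℝ u c‖ ≤ 0.502 * (M * R) := by
    refine (hu.norm_fderiv_center_le_sharp hR).trans ?_
    calc 4 / Real.pi * (M * R ^ 2 / 1000) / R + M * R / 2
        = (4 / Real.pi / 1000 + 1 / 2) * (M * R) := by field_simp
      _ ≤ 0.502 * (M * R) := by
          gcongr
          linarith [four_div_pi_lt]
  have hlog := seven_fifths_le_mul_log (t := r / R) ((le_div_iff₀ hR).2 (by linarith))
    ((div_le_iff₀ hR).2 (by linarith))
  calc ‖fderiv ℝ u z - fderiv ℝ u c‖ ≤ 7 / 5 * (M * R) := by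
        linarith [norm_sub_le_of_le hz_le hc_le]
    _ ≤ 4 * (r / R * Real.log (4 / (r / R))) * (M * R) := by gcongr
    _ = 4 * M * (r * Real.log (4 * R / r)) := by
        rw [div_div_eq_mul_div]
        field_simp

lemma exists_norm_fderiv_sub_le (hu : PoissonBounds u c R M S) (hR : 0 < R) (hε : 0 < ε) :
    ∃ v : ℂ → ℂ, PoissonBounds v c R M ε ∧ ∀ z ∈ ball c R, ‖fderiv ℝ u z - fderiv ℝ u c‖ ≤
      4 / Real.pi * (S + ε) / R * (1 / (1 - dist z c / R) ^ 2 - 1) +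
        ‖fderiv ℝ v z - fderiv ℝ v c‖ := by
  obtain ⟨h, hh, hhS, hv⟩ := hu.exists_harmonic_sub hR hε
  refine ⟨u - h, hv, fun z hz => ?_⟩
  have hfderiv : ∀ w ∈ ball c R, fderiv ℝ (u - h) w = fderiv ℝ u w - fderiv ℝ h w :=
    fun w hw => fderiv_sub (hu.differentiableAt hw)
      ((hh w (mem_univ w)).1.differentiableAt two_ne_zero)
  have hsplit : fderiv ℝ u z - fderiv ℝ u c = (fderiv ℝ h z - fderiv ℝ h c) +
      (fderiv ℝ (u - h) z - fderiv ℝ (u - h) c) := by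
    rw [hfderiv z hz, hfderiv c (mem_ball_self (pos_of_mem_ball hz))]
    abel
  rw [hsplit, dist_eq_norm]
  exact norm_add_le_of_le
    (norm_fderiv_sub_le_of_harmonicOnNhd (hh.mono (subset_univ _)) hhS hz) le_rfl

lemma exists_half_radius (hu : PoissonBounds u c R M (M * R ^ 2 / 1000)) (hR : 0 < R)
    (hM : 0 < M) : ∃ v : ℂ → ℂ, PoissonBounds v c (R / 2) M (M * (R / 2) ^ 2 / 1000) ∧
      ∀ z, dist z c ≤ R / 10 → ‖fderiv ℝ u z - fderiv ℝ u c‖ ≤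
        4 * M * (dist z c * Real.log 2) + ‖fderiv ℝ v z - fderiv ℝ v c‖ := by
  have hhalf : PoissonBounds u c (R / 2) M (M * R ^ 2 / 1000 + 3 / 16 * M * R ^ 2) := by
    refine hu.restrict (by simpa using hR.le) fun x hx => ?_
    have := hu.norm_le hR.ne' (sphere_subset_closedBall.trans
      (closedBall_subset_closedBall (half_le_self hR.le)) hx)
    rw [mem_sphere_iff_norm.1 hx, Complex.finrank_real_complex] at this
    push_cast at this
    linarith
  obtain ⟨v, hv, hsplit⟩ := hhalf.exists_norm_fderiv_sub_le (ε := M * (R / 2) ^ 2 / 1000)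
    (half_pos hR) (by positivity)
  refine ⟨v, hv, fun z hz => (hsplit z (mem_ball.2 (by linarith))).trans
    (add_le_add ?_ le_rfl)⟩
  set s := dist z c / (R / 2) with hs
  have hs0 : 0 ≤ s := by positivity
  have hs5 : s ≤ 1 / 5 := (div_le_iff₀ (half_pos hR)).2 (by linarith)
  have hgrowth : 1 / (1 - s) ^ 2 - 1 ≤ 2.8125 * s := by
    rw [sub_le_iff_le_add, div_le_iff₀ (by nlinarith)]
    nlinarith [mul_nonneg hs0 (sub_nonneg.2 hs5), mul_nonneg hs0 hs0]
  have hgrowth0 : 0 ≤ 1 / (1 - s) ^ 2 - 1 := sub_nonneg.2 <|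
    one_le_one_div (by nlinarith) (pow_le_one₀ (by linarith) (by linarith))
  calc 4 / Real.pi * (M * R ^ 2 / 1000 + 3 / 16 * M * R ^ 2 + M * (R / 2) ^ 2 / 1000) / (R / 2) *
        (1 / (1 - s) ^ 2 - 1)
      ≤ 1.274 * (M * R ^ 2 / 1000 + 3 / 16 * M * R ^ 2 + M * (R / 2) ^ 2 / 1000) / (R / 2) *
        (2.8125 * s) := by
        gcongr
        exact four_div_pi_lt.le
    _ = 4 * M * (dist z c * (0.67631484375)) := by rw [hs]; field_simp; ring
    _ ≤ 4 * M * (dist z c * Real.log 2) := by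
        gcongr
        linarith [Real.log_two_gt_d9]

lemma norm_fderiv_sub_le_of_div_pow_le (n : ℕ)
    (hu : PoissonBounds u c R M (M * R ^ 2 / 1000)) (hR : 0 < R) (hM : 0 < M)
    (hz : R / (10 * 2 ^ n) ≤ dist z c) (hz' : dist z c ≤ R / 2) :
    ‖fderiv ℝ u z - fderiv ℝ u c‖ ≤ 4 * M * (dist z c * Real.log (4 * R / dist z c)) := by
  induction n generalizing u R with
  | zero => exact hu.norm_fderiv_sub_le_of_tenth_le hR (by simpa using hz) hz'
  | succ n ih =>
    rcases le_total (R / 10) (dist z c) with hfar | hnear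
    · exact hu.norm_fderiv_sub_le_of_tenth_le hR hfar hz'
    have hpos : 0 < dist z c := lt_of_lt_of_le (by positivity) hz
    obtain ⟨v, hv, hsplit⟩ := hu.exists_half_radius hR hM
    have hscale : R / 2 / (10 * 2 ^ n) ≤ dist z c := by
      rwa [div_div, show (2 : ℝ) * (10 * 2 ^ n) = 10 * 2 ^ (n + 1) by ring]
    have hlog : Real.log (4 * R / dist z c) =
        Real.log 2 + Real.log (4 * (R / 2) / dist z c) := by
      rw [← Real.log_mul two_ne_zero (by positivity)]
      congr 1
      ring
    calc ‖fderiv ℝ u z - fderiv ℝ u c‖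
        ≤ 4 * M * (dist z c * Real.log 2) + ‖fderiv ℝ v z - fderiv ℝ v c‖ := hsplit z hnear
      _ ≤ 4 * M * (dist z c * Real.log 2) +
            4 * M * (dist z c * Real.log (4 * (R / 2) / dist z c)) := by
          gcongr
          exact ih hv (half_pos hR) hscale (by linarith)
      _ = 4 * M * (dist z c * Real.log (4 * R / dist z c)) := by
          rw [hlog]
          ring

theorem norm_fderiv_sub_le (hu : PoissonBounds u c R M S) (hR : 0 < R)
    (hz : dist z c ≤ R / 2) : ‖fderiv ℝ u z - fderiv ℝ u c‖ ≤
      4 / Real.pi * S / R * (1 / (1 - dist z c / R) ^ 2 - 1) +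
        4 * M * (dist z c * Real.log (4 * R / dist z c)) := by
  rcases (dist_nonneg (x := z) (y := c)).eq_or_lt with hzc | hpos
  · obtain rfl := dist_eq_zero.1 hzc.symm
    simp
  have hM := hu.laplacian_bound_nonneg hR
  suffices ∀ ε > 0, ‖fderiv ℝ u z - fderiv ℝ u c‖ ≤
      4 / Real.pi * (S + ε * R ^ 2 / 1000) / R * (1 / (1 - dist z c / R) ^ 2 - 1) +
        4 * (M + ε) * (dist z c * Real.log (4 * R / dist z c)) by
    simpa using le_of_forall_pos_le_of_continuousAt (by fun_prop) this
  intro ε hε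
  obtain ⟨v, hv, hsplit⟩ := hu.exists_norm_fderiv_sub_le hR
    (show 0 < ε * R ^ 2 / 1000 by positivity)
  have hv' : PoissonBounds v c R (M + ε) ((M + ε) * R ^ 2 / 1000) :=
    hv.mono (by linarith) (by gcongr; linarith)
  obtain ⟨n, hn⟩ := pow_unbounded_of_one_lt (R / (10 * dist z c)) one_lt_two
  have hscale : R / (10 * 2 ^ n) ≤ dist z c := by
    rw [div_lt_iff₀ (by positivity)] at hn
    exact (div_le_iff₀ (by positivity)).2 (by linarith)
  exact (hsplit z (mem_ball.2 (by linarith))).trans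
    (add_le_add_right (hv'.norm_fderiv_sub_le_of_div_pow_le n hR (by positivity) hscale hz) _)

end PoissonBounds

end GradientOscillation

section Landau

lemma ball_subset_image_ball {X F : Type*} [PseudoMetricSpace X] [ProperSpace X]
    [NormedAddCommGroup F] [NormedSpace ℝ F] {f : X → F} {c : X} {r δ : ℝ} (hr : 0 < r)
    (hf : ContinuousOn f (closedBall c r)) (hopen : IsOpen (f '' ball c r))
    (hδ : ∀ x ∈ sphere c r, δ ≤ ‖f x - f c‖) : ball (f c) δ ⊆ f '' ball c r := by
  rcases (ball (f c) δ).eq_empty_or_nonempty with hempty | hne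
  · simp [hempty]
  have hclosed : IsClosed (f '' closedBall c r) :=
    ((isCompact_closedBall c r).image_of_continuousOn hf).isClosed
  refine (convex_ball (f c) δ).isPreconnected.subset_left_of_subset_union hopen
    hclosed.isOpen_compl (disjoint_compl_right.mono_left (image_mono ball_subset_closedBall))
    (fun w hw => or_iff_not_imp_right.2 fun hw' => ?_)
    ⟨f c, mem_ball_self (nonempty_ball.1 hne), c, mem_ball_self hr, rfl⟩
  obtain ⟨x, hx, rfl⟩ := not_not.1 hw'
  refine ⟨x, mem_ball.2 (lt_of_le_of_ne hx fun hxr => ?_), rfl⟩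
  exact (hδ x hxr).not_gt (mem_ball_iff_norm.1 hw)

section NormedSpace

variable {E F : Type*} [NormedAddCommGroup E] [NormedSpace ℝ E] [NormedAddCommGroup F]
  [NormedSpace ℝ F] {f : E → F} {c x : E} {r a b : ℝ}

lemma injOn_ball_of_norm_fderiv_sub_le (ha : 0 < a)
    (hf : ∀ x ∈ ball c r, DifferentiableAt ℝ f x)
    (hosc : ∀ x ∈ ball c r, ‖fderiv ℝ f x - fderiv ℝ f c‖ ≤ a * ‖x - c‖ + b)
    (hlow : ∀ e, (a * r + b) * ‖e‖ ≤ ‖fderiv ℝ f c e‖) : InjOn f (ball c r) := by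
  intro x hx y hy hxy
  by_contra hne
  set ρ := max ‖x - c‖ ‖y - c‖
  have hρ : ρ < r := max_lt (mem_ball_iff_norm.1 hx) (mem_ball_iff_norm.1 hy)
  have hsub : closedBall c ρ ⊆ ball c r := closedBall_subset_ball hρ
  have hmv := (convex_closedBall c ρ).norm_image_sub_le_of_norm_fderiv_le' (𝕜 := ℝ)
    (C := a * ρ + b) (fun z hz => hf z (hsub hz))
    (fun z hz => (hosc z (hsub hz)).trans (by gcongr; exact mem_closedBall_iff_norm.1 hz))
    (mem_closedBall_iff_norm.2 (le_max_left _ _)) (mem_closedBall_iff_norm.2 (le_max_right _ _))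
  rw [hxy, sub_self, zero_sub, norm_neg] at hmv
  have hle := le_of_mul_le_mul_right ((hlow _).trans hmv) (norm_sub_pos_iff.2 (Ne.symm hne))
  nlinarith

lemma norm_image_sub_sub_fderiv_le (hf : ∀ x ∈ closedBall c r, DifferentiableAt ℝ f x)
    (hosc : ∀ x ∈ closedBall c r, ‖fderiv ℝ f x - fderiv ℝ f c‖ ≤ a * ‖x - c‖ + b)
    (hx : x ∈ closedBall c r) :
    ‖f x - f c - fderiv ℝ f c (x - c)‖ ≤ (a * ‖x - c‖ / 2 + b) * ‖x - c‖ := by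
  set e := x - c with he
  have hmem : ∀ t ∈ Icc (0 : ℝ) 1, c + t • e ∈ closedBall c r := fun t ht =>
    (convex_closedBall c r).add_smul_sub_mem
      (mem_closedBall_self (nonempty_closedBall.1 ⟨x, hx⟩)) hx ht
  have hpath : ∀ t ∈ Icc (0 : ℝ) 1,
      HasDerivAt (fun t : ℝ => f (c + t • e) - f c - t • fderiv ℝ f c e)
        (fderiv ℝ f (c + t • e) e - fderiv ℝ f c e) t := fun t ht => by
    have hline : HasDerivAt (fun t : ℝ => c + t • e) e t := by
      simpa using ((hasDerivAt_id t).smul_const e).const_add c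
    have hlin : HasDerivAt (fun t : ℝ => t • fderiv ℝ f c e) (fderiv ℝ f c e) t := by
      simpa using (hasDerivAt_id t).smul_const (fderiv ℝ f c e)
    exact (((hf _ (hmem t ht)).hasFDerivAt.comp_hasDerivAt t hline).sub_const _).sub hlin
  have hbound : ∀ t : ℝ, HasDerivAt (fun t => (a * t * ‖e‖ / 2 + b) * t * ‖e‖)
      ((a * t * ‖e‖ + b) * ‖e‖) t := fun t => by
    have hid := hasDerivAt_id' t
    refine ((((((hid.const_mul a).mul_const ‖e‖).div_const 2).add_const b).mul hid).mul_const
      ‖e‖).congr_deriv ?_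
    ring
  have hmain := image_norm_le_of_norm_deriv_right_le_deriv_boundary
    (fun t ht => (hpath t ht).continuousAt.continuousWithinAt)
    (fun t ht => (hpath t (Ico_subset_Icc_self ht)).hasDerivWithinAt) (by simp) hbound
    (fun t ht => ?_) (right_mem_Icc.2 zero_le_one)
  · simpa [he] using hmain
  · refine (ContinuousLinearMap.le_of_opNorm_le _
      (hosc _ (hmem t (Ico_subset_Icc_self ht))) e).trans_eq ?_
    rw [add_sub_cancel_left, norm_smul, Real.norm_of_nonneg ht.1, mul_assoc]

end NormedSpace

section FiniteDimensional

variable {E : Type*} [NormedAddCommGroup E] [NormedSpace ℝ E] [FiniteDimensional ℝ E]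
  {f : E → E} {c : E} {r a b : ℝ}

lemma isOpen_image_of_fderiv_injective {s : Set E} (hs : IsOpen s)
    (hf : ∀ x ∈ s, ContDiffAt ℝ 1 f x) (hinj : ∀ x ∈ s, Function.Injective (fderiv ℝ f x)) :
    IsOpen (f '' s) := by
  have := FiniteDimensional.complete ℝ E
  refine isOpen_iff_mem_nhds.2 (forall_mem_image.2 fun x hx => ?_)
  have hsurj : (fderiv ℝ f x).range = ⊤ :=
    LinearMap.range_eq_top.2 (LinearMap.surjective_of_injective (hinj x hx))
  rw [← ((hf x hx).hasStrictFDerivAt one_ne_zero).map_nhds_eq_of_surj hsurj]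
  exact image_mem_map (hs.mem_nhds hx)

theorem injOn_and_ball_subset_image_of_norm_fderiv_sub_le (hr : 0 < r) (ha : 0 < a)
    (hf : ∀ x ∈ closedBall c r, ContDiffAt ℝ 1 f x)
    (hosc : ∀ x ∈ closedBall c r, ‖fderiv ℝ f x - fderiv ℝ f c‖ ≤ a * ‖x - c‖ + b)
    (hlow : ∀ e, (a * r + b) * ‖e‖ ≤ ‖fderiv ℝ f c e‖) :
    InjOn f (ball c r) ∧ ball (f c) (a * r ^ 2 / 2) ⊆ f '' ball c r := by
  have := FiniteDimensional.proper_real E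
  have hdiff : ∀ x ∈ closedBall c r, DifferentiableAt ℝ f x :=
    fun x hx => (hf x hx).differentiableAt one_ne_zero
  have hsub : ball c r ⊆ closedBall c r := ball_subset_closedBall
  refine ⟨injOn_ball_of_norm_fderiv_sub_le ha (fun x hx => hdiff x (hsub hx))
    (fun x hx => hosc x (hsub hx)) hlow, ball_subset_image_ball hr
    (fun x hx => (hdiff x hx).continuousAt.continuousWithinAt)
    (isOpen_image_of_fderiv_injective isOpen_ball (fun x hx => hf x (hsub hx)) fun x hx => ?_)
    fun x hx => ?_⟩
  · refine (injective_iff_map_eq_zero _).2 fun e he => by_contra fun hne => ?_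
    have hle := (fderiv ℝ f x - fderiv ℝ f c).le_of_opNorm_le (hosc x (hsub hx)) e
    rw [sub_apply, he, zero_sub, norm_neg] at hle
    have := le_of_mul_le_mul_right ((hlow e).trans hle) (norm_pos_iff.2 hne)
    nlinarith [mem_ball_iff_norm.1 hx]
  · have hrem := norm_image_sub_sub_fderiv_le hdiff hosc (sphere_subset_closedBall hx)
    have hlin := hlow (x - c)
    have htri := norm_sub_norm_le (fderiv ℝ f c (x - c)) (f x - f c)
    rw [norm_sub_rev (fderiv ℝ f c (x - c))] at htri
    rw [mem_sphere_iff_norm.1 hx] at hrem hlin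
    linarith

end FiniteDimensional

section Jacobian

variable {f : ℂ → ℂ} {z : ℂ}

lemma norm_wdz_sq_sub_norm_wdzbar_sq_mul_norm_sq (f : ℂ → ℂ) (z e : ℂ) :
    (‖wdz f z‖ ^ 2 - ‖wdzbar f z‖ ^ 2) * ‖e‖ ^ 2 =
      (starRingEnd ℂ (fderiv ℝ f z e) * fderiv ℝ f z (Complex.I * e)).im := by
  have he : e = e.re • 1 + e.im • Complex.I := by simp
  have hIe : Complex.I * e = e.re • Complex.I - e.im • 1 := by
    apply Complex.ext <;> simp
  rw [hIe]
  conv_rhs => rw [he]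
  simp only [map_add, map_sub, map_smul, wdz, wdzbar, Complex.sq_norm, Complex.normSq_apply]
  simp only [Complex.div_ofNat_re, Complex.div_ofNat_im, Complex.add_re, Complex.add_im,
    Complex.sub_re, Complex.sub_im, Complex.mul_re, Complex.mul_im, Complex.I_re, Complex.I_im,
    Complex.one_re, Complex.one_im, Complex.real_smul, Complex.ofReal_re, Complex.ofReal_im,
    Complex.conj_re, Complex.conj_im]
  ring

lemma norm_wdz_sq_sub_norm_wdzbar_sq_mul_norm_le (f : ℂ → ℂ) (z e : ℂ) :
    (‖wdz f z‖ ^ 2 - ‖wdzbar f z‖ ^ 2) * ‖e‖ ≤ ‖fderiv ℝ f z‖ * ‖fderiv ℝ f z e‖ := by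
  rcases eq_or_ne e 0 with rfl | he
  · simp
  refine le_of_mul_le_mul_right ?_ (norm_pos_iff.2 he)
  calc (‖wdz f z‖ ^ 2 - ‖wdzbar f z‖ ^ 2) * ‖e‖ * ‖e‖
      = (starRingEnd ℂ (fderiv ℝ f z e) * fderiv ℝ f z (Complex.I * e)).im := by
        rw [← norm_wdz_sq_sub_norm_wdzbar_sq_mul_norm_sq]
        ring
    _ ≤ ‖fderiv ℝ f z e‖ * ‖fderiv ℝ f z (Complex.I * e)‖ := by
        simpa using Complex.im_le_norm
          (starRingEnd ℂ (fderiv ℝ f z e) * fderiv ℝ f z (Complex.I * e))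
    _ ≤ ‖fderiv ℝ f z e‖ * (‖fderiv ℝ f z‖ * ‖e‖) := by
        gcongr
        simpa using (fderiv ℝ f z).le_opNorm (Complex.I * e)
    _ = ‖fderiv ℝ f z‖ * ‖fderiv ℝ f z e‖ * ‖e‖ := by ring

lemma one_le_norm_fderiv_of_jacobian_eq_one (hJ : ‖wdz f z‖ ^ 2 - ‖wdzbar f z‖ ^ 2 = 1) :
    1 ≤ ‖fderiv ℝ f z‖ := by
  have hone := norm_wdz_sq_sub_norm_wdzbar_sq_mul_norm_le f z 1
  have hop := (fderiv ℝ f z).le_opNorm 1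
  rw [hJ] at hone
  simp only [norm_one, mul_one] at hone hop
  nlinarith [norm_nonneg (fderiv ℝ f z)]

lemma one_div_mul_norm_le_norm_fderiv_apply {Λ : ℝ} (hΛ : ‖fderiv ℝ f z‖ ≤ Λ)
    (hJ : ‖wdz f z‖ ^ 2 - ‖wdzbar f z‖ ^ 2 = 1) (e : ℂ) : 1 / Λ * ‖e‖ ≤ ‖fderiv ℝ f z e‖ := by
  have hΛ0 : 0 < Λ := one_pos.trans_le ((one_le_norm_fderiv_of_jacobian_eq_one hJ).trans hΛ)
  have he := norm_wdz_sq_sub_norm_wdzbar_sq_mul_norm_le f z e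
  rw [hJ, one_mul] at he
  rw [one_div_mul_eq_div, div_le_iff₀' hΛ0]
  exact he.trans (by gcongr)

end Jacobian

section Radius

lemma one_div_one_sub_sq_sub_one_le {r R : ℝ} (hr : 0 ≤ r) (hrR : r ≤ R) (hR : R < 1) :
    1 / (1 - r) ^ 2 - 1 ≤ r * ((2 - R) / (1 - R) ^ 2) := by
  have hr1 : 0 < 1 - r := by linarith
  have hR1 : 0 < 1 - R := by linarith
  calc 1 / (1 - r) ^ 2 - 1 = r * (1 / (1 - r) + 1 / (1 - r) ^ 2) := by field_simp; ring
    _ ≤ r * (1 / (1 - R) + 1 / (1 - R) ^ 2) := by gcongr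
    _ = r * ((2 - R) / (1 - R) ^ 2) := by field_simp; ring

lemma four_mul_log_le {r R : ℝ} (hr : 0 ≤ r) (hrR : r ≤ R) (hR0 : 0 < R) (hR : R ≤ 1) :
    4 * (r * Real.log (4 / r)) ≤
      2 * (Real.log (4 * (1 + R)) - Real.log R) * ((2 + R) * R) := by
  have hlog4 : 0 ≤ Real.log (4 / R) :=
    Real.log_nonneg ((one_le_div hR0).2 (by linarith))
  have hlog : Real.log (4 / R) ≤ Real.log (4 * (1 + R)) - Real.log R := by
    rw [← Real.log_div (by positivity) hR0.ne']
    gcongr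
    linarith
  calc 4 * (r * Real.log (4 / r)) ≤ 4 * (R * Real.log (4 / R)) := by
        gcongr 4 * ?_
        exact mul_log_four_div_le hr hrR hR
    _ = 2 * Real.log (4 / R) * ((2 + 0) * R) := by ring
    _ ≤ 2 * (Real.log (4 * (1 + R)) - Real.log R) * ((2 + R) * R) := by
        have := hlog4.trans hlog
        gcongr

lemma radius_le_half {M₁ M₂ r : ℝ} (hM₁ : 0 ≤ M₁) (hM₂ : 0 ≤ M₂) (hr : r ∈ Ioo (0 : ℝ) 1)
    (hΛ : 1 ≤ 4 / Real.pi * M₂ + 2 / 3 * M₁)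
    (hle : 4 * M₂ / Real.pi * (r * (2 - r) / (1 - r) ^ 2) +
      2 * M₁ * (Real.log (4 * (1 + r)) - Real.log r) * ((2 + r) * r) ≤
        1 / (4 / Real.pi * M₂ + 2 / 3 * M₁)) : r ≤ 1 / 2 := by
  obtain ⟨hr0, hr1⟩ := hr
  by_contra! hlt
  have hharm : 3 ≤ r * (2 - r) / (1 - r) ^ 2 := by
    rw [le_div_iff₀ (by nlinarith)]
    nlinarith
  have hlog : 1 ≤ Real.log (4 * (1 + r)) - Real.log r := by
    have h4 : Real.log 4 ≤ Real.log (4 * (1 + r)) := by gcongr; linarith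
    have h2 : Real.log 4 = 2 * Real.log 2 := by
      rw [show (4 : ℝ) = 2 ^ 2 by norm_num, Real.log_pow]
      norm_num
    linarith [Real.log_two_gt_d9, Real.log_neg hr0 hr1]
  have hpoly : 1 ≤ (2 + r) * r := by nlinarith
  have hlow : 4 * M₂ / Real.pi * 3 + 2 * M₁ * 1 * 1 ≤ 1 / (4 / Real.pi * M₂ + 2 / 3 * M₁) :=
    hle.trans' (by gcongr)
  have hup : 1 / (4 / Real.pi * M₂ + 2 / 3 * M₁) ≤ 1 := div_le_one_of_le₀ hΛ (by linarith)
  rw [mul_div_right_comm] at hlow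
  linarith

end Radius

section UnitDisk

variable {f : ℂ → ℂ} {M₁ M₂ : ℝ}

lemma poissonBounds_of_norm_lap_le (hf2 : ContDiffOn ℝ 2 f (ball 0 1))
    (hfc : ContinuousOn f (closedBall 0 1)) (hlap : ∀ z ∈ ball 0 1, ‖lap f z‖ ≤ M₁)
    (hfb : ∀ z ∈ ball 0 1, ‖f z‖ ≤ M₂) : PoissonBounds f 0 1 M₁ M₂ where
  continuousOn := hfc
  contDiffOn := hf2
  norm_laplacian_le z hz :=
    lap_eq_laplacian (hf2.contDiffAt (isOpen_ball.mem_nhds hz)) ▸ hlap z hz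
  norm_le_of_mem_sphere z hz := by
    have hcl : closure (ball (0 : ℂ) 1) = closedBall 0 1 := closure_ball _ one_ne_zero
    exact le_on_closure hfb (hcl ▸ hfc.norm) continuousOn_const
      (hcl ▸ sphere_subset_closedBall hz)

lemma PoissonBounds.norm_fderiv_sub_center_le {c z : ℂ} {r : ℝ} (hf : PoissonBounds f c 1 M₁ M₂)
    (hr0 : 0 < r) (hr : r ≤ 1 / 2) (hz : z ∈ closedBall c r) :
    ‖fderiv ℝ f z - fderiv ℝ f c‖ ≤ 4 / Real.pi * M₂ * ((2 - r) / (1 - r) ^ 2) * ‖z - c‖ +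
      2 * M₁ * (Real.log (4 * (1 + r)) - Real.log r) * ((2 + r) * r) := by
  have hM₁ := hf.laplacian_bound_nonneg one_pos
  have hM₂ := hf.sphere_bound_nonneg zero_le_one
  have hzr : ‖z - c‖ ≤ r := mem_closedBall_iff_norm.1 hz
  have hosc := hf.norm_fderiv_sub_le one_pos (hz.trans hr)
  rw [dist_eq_norm, div_one, div_one, mul_one] at hosc
  have hharm := mul_le_mul_of_nonneg_left
    (one_div_one_sub_sq_sub_one_le (norm_nonneg (z - c)) hzr (by linarith))
    (show 0 ≤ 4 / Real.pi * M₂ by positivity)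
  have hlog := mul_le_mul_of_nonneg_left
    (four_mul_log_le (norm_nonneg (z - c)) hzr hr0 (by linarith)) hM₁
  linarith

theorem stmt15_general (hM₂ : 0 < M₂) (hf : PoissonBounds f 0 1 M₁ M₂)
    (hJ : ‖wdz f 0‖ ^ 2 - ‖wdzbar f 0‖ ^ 2 = 1) {r : ℝ} (hr : r ∈ Ioo (0 : ℝ) 1)
    (hle : 4 * M₂ / Real.pi * (r * (2 - r) / (1 - r) ^ 2) +
      2 * M₁ * (Real.log (4 * (1 + r)) - Real.log r) * ((2 + r) * r) ≤
        1 / (4 / Real.pi * M₂ + 2 / 3 * M₁)) :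
    InjOn f (ball 0 r) ∧
      ball (f 0) (2 * M₂ / Real.pi * (r ^ 2 * (2 - r) / (1 - r) ^ 2)) ⊆ f '' ball 0 r := by
  have hM₁ := hf.laplacian_bound_nonneg one_pos
  have hΛ : ‖fderiv ℝ f 0‖ ≤ 4 / Real.pi * M₂ + 2 / 3 * M₁ :=
    (hf.norm_fderiv_center_le_sharp one_pos).trans (by linarith)
  have hr_half : r ≤ 1 / 2 := radius_le_half hM₁ hM₂.le hr
    ((one_le_norm_fderiv_of_jacobian_eq_one hJ).trans hΛ) hle
  obtain ⟨hr0, hr1⟩ := hr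
  set a := 4 / Real.pi * M₂ * ((2 - r) / (1 - r) ^ 2) with ha
  have ha_pos : 0 < a := by
    have : 0 < 1 - r := by linarith
    have : 0 < 2 - r := by linarith
    positivity
  have hradius : a * r ^ 2 / 2 = 2 * M₂ / Real.pi * (r ^ 2 * (2 - r) / (1 - r) ^ 2) := by
    rw [ha]
    ring
  rw [← hradius]
  refine injOn_and_ball_subset_image_of_norm_fderiv_sub_le hr0 ha_pos
    (fun z hz => (hf.contDiffAt (closedBall_subset_ball hr1 hz)).of_le one_le_two)
    (fun z hz => hf.norm_fderiv_sub_center_le hr0 hr_half hz)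
    fun e => le_trans ?_ (one_div_mul_norm_le_norm_fderiv_apply hΛ hJ e)
  gcongr
  refine hle.trans_eq' ?_
  rw [ha]
  ring

end UnitDisk

end Landau

/-- Landau type theorem for solutions of the Poisson equation (Theorem 1.8). -/
theorem stmt15 (M₁ M₂ : ℝ) (hM₁ : 0 ≤ M₁) (hM₂ : 0 < M₂) (g f : ℂ → ℂ)
    (hg : ContinuousOn g (closedBall (0:ℂ) 1))
    (hf2 : ContDiffOn ℝ 2 f (ball (0:ℂ) 1))
    (hfc : ContinuousOn f (closedBall (0:ℂ) 1))
    (hfg : ∀ z ∈ ball (0:ℂ) 1, lap f z = g z)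
    (hf0 : f 0 = 0)
    (hJ : ‖wdz f 0‖ ^ 2 - ‖wdzbar f 0‖ ^ 2 = 1)
    (hgb : ∀ z ∈ ball (0:ℂ) 1, ‖g z‖ ≤ M₁)
    (hfb : ∀ z ∈ ball (0:ℂ) 1, ‖f z‖ ≤ M₂)
    (r₀ : ℝ) (hr₀ : r₀ ∈ Set.Ioo (0:ℝ) 1)
    (heq : 1 / (4 / Real.pi * M₂ + 2 / 3 * M₁) -
        4 * M₂ / Real.pi * (r₀ * (2 - r₀) / (1 - r₀) ^ 2) -
        2 * M₁ * (Real.log (4 * (1 + r₀)) - Real.log r₀) * ((2 + r₀) * r₀) = 0) :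
    Set.InjOn f (ball (0:ℂ) r₀) ∧
    ∃ R₀ : ℝ, R₀ ≥ 2 * M₂ / Real.pi * (r₀ ^ 2 * (2 - r₀) / (1 - r₀) ^ 2) ∧
      ball (0:ℂ) R₀ ⊆ f '' ball (0:ℂ) r₀ := by
  obtain ⟨hinj, hcover⟩ := stmt15_general hM₂ (poissonBounds_of_norm_lap_le hf2 hfc
    (fun z hz => hfg z hz ▸ hgb z hz) hfb) hJ hr₀ (by linarith)
  exact ⟨hinj, _, le_rfl, by rwa [hf0] at hcover⟩
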